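/- Assume a := ess sup ξ₀ < ∞ and that there exist α ∈ (0,2) and λ₀ > 0 such that Q{ξ₀⁻ > λ} ≥ 1/(log λ)^{α} for all λ ≥ λ₀. Then for every ε' > 0, ℙ⊗Q-almost surely, lim_{n→∞} n^{−2/α+ε'} Z_n = −∞. -/

import Mathlib

open MeasureTheory ProbabilityTheory Filter Set

/-- Nearest-neighbour transition probability of Sinai's walk: from `x`, a step `s`
has probability `p` if `s = 1`, `1 − p` if `s = −1`, and `0` otherwise, where
`p = ω_x` is the environment at the current site. -/
noncomputable def stepProb (p : ℝ) (s : ℤ) : ℝ :=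
  if s = 1 then p else if s = -1 then 1 - p else 0

/-- increments of the supersolution -/
noncomputable def incE (L : ℤ) (p : ℤ → ℝ) (y : ℤ) : ℝ :=
  ∑ z ∈ Finset.Ioc (-L) y, (1 / p z) * ∏ w ∈ Finset.Ioc z y, ((1 - p w) / p w)

lemma incE_rec (L : ℤ) (p : ℤ → ℝ) (y : ℤ) (hy : -L < y) :
    incE L p y = ((1 - p y) / p y) * incE L p (y - 1) + 1 / p y := by
  have h1 : ∀ z, z < y → Finset.Ioc z y = insert y (Finset.Ioc z (y - 1)) := by
    intro z hz
    ext w; simp only [Finset.mem_Ioc, Finset.mem_insert]; omega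
  unfold incE
  rw [h1 _ hy, Finset.sum_insert (by simp), add_comm, Finset.mul_sum]
  congr 1
  · refine Finset.sum_congr rfl fun z hz => ?_
    rw [Finset.mem_Ioc] at hz
    rw [h1 z (by omega), Finset.prod_insert (by simp)]
    ring
  · simp

lemma incE_nonneg (L : ℤ) (p : ℤ → ℝ) (hp : ∀ i, -L < i → i < L → 0 < p i ∧ p i < 1)
    (y : ℤ) (hy : y < L) : 0 ≤ incE L p y := by
  unfold incE
  refine Finset.sum_nonneg fun z hz => ?_
  rw [Finset.mem_Ioc] at hz
  refine mul_nonneg ?_ (Finset.prod_nonneg fun w hw => ?_)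
  · have := hp z (by omega) (by omega)
    exact div_nonneg zero_le_one this.1.le
  · rw [Finset.mem_Ioc] at hw
    have := hp w (by omega) (by omega)
    exact div_nonneg (by linarith) this.1.le

lemma exists_super (N : ℕ) (p : ℤ → ℝ) (δ C : ℝ) (hδ0 : 0 < δ)
    (hp : ∀ i : ℤ, -(N:ℤ) < i → i < N → δ ≤ p i ∧ p i ≤ 1 - δ)
    (hC : ∀ z y : ℤ, -(N:ℤ) < z → z ≤ y → y < N →
      ∏ w ∈ Finset.Ioc z y, ((1 - p w) / p w) ≤ C) :
    ∃ f : ℤ → ℝ, (∀ x, 0 ≤ f x) ∧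
      (∀ x : ℤ, -(N:ℤ) < x → x < N → p x * f (x+1) + (1 - p x) * f (x - 1) = f x - 1) ∧
      f 0 ≤ 2 * N ^ 2 * (C / δ) := by
  have hp' : ∀ i : ℤ, -(N:ℤ) < i → i < N → 0 < p i ∧ p i < 1 := fun i h1 h2 => by
    have := hp i h1 h2; constructor <;> linarith
  refine ⟨fun x => ∑ y ∈ Finset.Ico x (N:ℤ), incE N p y, ?_, ?_, ?_⟩
  · intro x
    refine Finset.sum_nonneg fun y hy => incE_nonneg _ _ hp' y (Finset.mem_Ico.1 hy).2
  · intro x h1 h2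
    have hs : ∀ u : ℤ, u < N → ∑ y ∈ Finset.Ico u (N:ℤ), incE N p y
        = incE N p u + ∑ y ∈ Finset.Ico (u+1) (N:ℤ), incE N p y := by
      intro u hu
      have : Finset.Ico u (N:ℤ) = insert u (Finset.Ico (u+1) (N:ℤ)) := by
        ext w; simp only [Finset.mem_Ico, Finset.mem_insert]; omega
      rw [this, Finset.sum_insert (by simp)]
    have e1 := hs x h2
    have e2 := hs (x-1) (by omega)
    rw [sub_add_cancel] at e2
    have e3 := incE_rec N p x h1
    have hpx := (hp' x h1 h2).1
    have e4 : p x * incE N p x = (1 - p x) * incE N p (x-1) + 1 := by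
      rw [e3]; field_simp
    simp only
    rw [e2, e1]
    rw [e1] at e2
    linear_combination -e4
  · have hb : ∀ y ∈ Finset.Ico (0:ℤ) N, incE N p y ≤ (2 * N) * (C / δ) := by
      intro y hy
      rw [Finset.mem_Ico] at hy
      have hCd : 0 ≤ C / δ := by
        have h := hC 0 0 (by omega) le_rfl (by omega)
        simp at h
        exact div_nonneg (by linarith) hδ0.le
      calc incE N p y ≤ ∑ z ∈ Finset.Ioc (-(N:ℤ)) y, C / δ := by
            refine Finset.sum_le_sum fun z hz => ?_
            rw [Finset.mem_Ioc] at hz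
            have h1 := hC z y (by omega) (by omega) (by omega)
            have h2 := hp z (by omega) (by omega)
            have h3 : 1 / p z ≤ 1 / δ := one_div_le_one_div_of_le hδ0 h2.1
            have h4 : 0 ≤ ∏ w ∈ Finset.Ioc z y, ((1 - p w) / p w) := by
              refine Finset.prod_nonneg fun w hw => ?_
              rw [Finset.mem_Ioc] at hw
              have := hp' w (by omega) (by omega)
              exact div_nonneg (by linarith) this.1.le
            calc _ ≤ 1 / δ * C := mul_le_mul h3 h1 h4 (by positivity)
              _ = C / δ := by ring
        _ = ((Finset.Ioc (-(N:ℤ)) y).card : ℝ) * (C / δ) := by simp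
        _ ≤ _ := by
            refine mul_le_mul_of_nonneg_right ?_ hCd
            rw [Int.card_Ioc]
            have : (y - -(N:ℤ)).toNat ≤ 2 * N := by omega
            exact_mod_cast this
    calc _ ≤ ∑ y ∈ Finset.Ico (0:ℤ) N, (2 * N) * (C / δ) := Finset.sum_le_sum hb
      _ = _ := by simp; ring

open Classical in
/-- paths of length `n` from `0` inside `(-N, N)` -/
noncomputable def pset (N : ℕ) : ℕ → Finset (ℕ → ℤ)
  | 0 => {0}
  | n + 1 => ((pset N n) ×ˢ Finset.Ioo (-(N:ℤ)) N).image
      (fun q => Function.update q.1 (n+1) q.2)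

lemma pset_zero (N n : ℕ) : ∀ x ∈ pset N n, ∀ i, n < i → x i = 0 := by
  induction n with
  | zero => intro x hx; simp [pset] at hx; simp [hx]
  | succ n ih =>
    intro x hx i hi
    simp only [pset, Finset.mem_image, Finset.mem_product, Prod.exists] at hx
    obtain ⟨u, y, ⟨hu, -⟩, rfl⟩ := hx
    rw [Function.update_of_ne (by omega)]
    exact ih u hu i (by omega)

lemma pset_start (N n : ℕ) : ∀ x ∈ pset N n, x 0 = 0 := by
  induction n with
  | zero => intro x hx; simp [pset] at hx; simp [hx]
  | succ n ih =>
    intro x hx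
    simp only [pset, Finset.mem_image, Finset.mem_product, Prod.exists] at hx
    obtain ⟨u, y, ⟨hu, -⟩, rfl⟩ := hx
    rw [Function.update_of_ne (by omega)]
    exact ih u hu

lemma pset_bound (N n : ℕ) (hN : 0 < N) : ∀ x ∈ pset N n, ∀ i, -(N:ℤ) < x i ∧ x i < N := by
  induction n with
  | zero => intro x hx; simp [pset] at hx; simp [hx, hN]
  | succ n ih =>
    intro x hx i
    simp only [pset, Finset.mem_image, Finset.mem_product, Prod.exists, Finset.mem_Ioo] at hx
    obtain ⟨u, y, ⟨hu, hy⟩, rfl⟩ := hx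
    by_cases h : i = n+1
    · subst h; simpa using hy
    · rw [Function.update_of_ne h]
      exact ih u hu i

lemma pset_sum_succ (N n : ℕ) (G : (ℕ → ℤ) → ℝ) :
    ∑ x ∈ pset N (n+1), G x =
      ∑ x ∈ pset N n, ∑ y ∈ Finset.Ioo (-(N:ℤ)) N, G (Function.update x (n+1) y) := by
  classical
  rw [pset, Finset.sum_image, Finset.sum_product]
  rintro ⟨x, y⟩ hx ⟨x', y'⟩ hx' h
  simp only [Finset.coe_product, Set.mem_prod, Finset.mem_coe] at hx hx'
  simp only at h
  have hy : y = y' := by simpa using congrFun h (n+1)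
  refine Prod.ext ?_ hy
  funext i
  by_cases hi : i = n+1
  · subst hi
    simp only
    rw [pset_zero N n x hx.1 _ (by omega), pset_zero N n x' hx'.1 _ (by omega)]
  · simpa [Function.update_of_ne hi] using congrFun h i

/-- every trajectory that stays in `(-N,N)` follows one of the paths -/
lemma pset_cover (N n : ℕ) (X : ℕ → ℤ) (h0 : X 0 = 0)
    (hX : ∀ i ≤ n, -(N:ℤ) < X i ∧ X i < N) : ∃ x ∈ pset N n, ∀ i ≤ n, X i = x i := by
  induction n with
  | zero => exact ⟨0, by simp [pset], fun i hi => by simp [Nat.le_zero.1 hi, h0]⟩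
  | succ n ih =>
    obtain ⟨x, hx, hxi⟩ := ih fun i hi => hX i (by omega)
    refine ⟨Function.update x (n+1) (X (n+1)), ?_, ?_⟩
    · simp only [pset, Finset.mem_image, Finset.mem_product, Prod.exists, Finset.mem_Ioo]
      exact ⟨x, _, ⟨hx, hX _ le_rfl⟩, rfl⟩
    · intro i hi
      by_cases h : i = n+1
      · subst h; simp
      · rw [Function.update_of_ne h]; exact hxi i (by omega)

/-- weight of a path -/
noncomputable def pw (p : ℤ → ℝ) (n : ℕ) (x : ℕ → ℤ) : ℝ :=
  ∏ i ∈ Finset.range n, stepProb (p (x i)) (x (i + 1) - x i)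

lemma pw_update (p : ℤ → ℝ) (n : ℕ) (x : ℕ → ℤ) (y : ℤ) :
    pw p (n+1) (Function.update x (n+1) y) = pw p n x * stepProb (p (x n)) (y - x n) := by
  unfold pw
  rw [Finset.prod_range_succ]
  congr 1
  · refine Finset.prod_congr rfl fun i hi => ?_
    rw [Finset.mem_range] at hi
    rw [Function.update_of_ne (by omega), Function.update_of_ne (by omega)]
  · simp

lemma stepProb_nonneg (p : ℝ) (h0 : 0 ≤ p) (h1 : p ≤ 1) (s : ℤ) : 0 ≤ stepProb p s := by
  unfold stepProb; split_ifs <;> linarith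

lemma pw_nonneg (N : ℕ) (hN : 0 < N) (p : ℤ → ℝ)
    (hp : ∀ i : ℤ, -(N:ℤ) < i → i < N → 0 ≤ p i ∧ p i ≤ 1) (n : ℕ) (x : ℕ → ℤ)
    (hx : x ∈ pset N n) : 0 ≤ pw p n x := by
  refine Finset.prod_nonneg fun i _ => ?_
  have h := pset_bound N n hN x hx i
  have := hp _ h.1 h.2
  exact stepProb_nonneg _ this.1 this.2 _

lemma sum_step_le (N : ℕ) (p : ℝ) (h0 : 0 ≤ p) (h1 : p ≤ 1) (f : ℤ → ℝ) (hf : ∀ x, 0 ≤ f x)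
    (x : ℤ) :
    ∑ y ∈ Finset.Ioo (-(N:ℤ)) N, stepProb p (y - x) * f y ≤ p * f (x+1) + (1-p) * f (x-1) := by
  calc ∑ y ∈ Finset.Ioo (-(N:ℤ)) N, stepProb p (y - x) * f y
      = ∑ y ∈ Finset.Ioo (-(N:ℤ)) N, ((if y = x+1 then p * f (x+1) else 0)
          + (if y = x - 1 then (1-p) * f (x-1) else 0)) := by
        refine Finset.sum_congr rfl fun y _ => ?_
        unfold stepProb
        by_cases a : y = x + 1
        · subst a
          have : ¬ (x + 1 = x - 1) := by omega
          simp [this]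
        · by_cases b : y = x - 1
          · subst b
            have : ¬ (x - 1 = x + 1) := by omega
            simp [this]
          · have a' : ¬ (y - x = 1) := by omega
            have b' : ¬ (y - x = -1) := by omega
            simp [a, b, a', b']
    _ ≤ _ := by
        rw [Finset.sum_add_distrib, Finset.sum_ite_eq', Finset.sum_ite_eq']
        have := mul_nonneg h0 (hf (x+1))
        have := mul_nonneg (sub_nonneg.2 h1) (hf (x-1))
        split_ifs <;> linarith

lemma stay_bound (N : ℕ) (hN : 0 < N) (p : ℤ → ℝ) (δ C : ℝ) (hδ0 : 0 < δ)
    (hp : ∀ i : ℤ, -(N:ℤ) < i → i < N → δ ≤ p i ∧ p i ≤ 1 - δ)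
    (hC : ∀ z y : ℤ, -(N:ℤ) < z → z ≤ y → y < N →
      ∏ w ∈ Finset.Ioc z y, ((1 - p w) / p w) ≤ C) (n : ℕ) :
    (n + 1) * ∑ x ∈ pset N n, pw p n x ≤ 2 * N ^ 2 * (C / δ) := by
  obtain ⟨f, hf, hfs, hf0⟩ := exists_super N p δ C hδ0 hp hC
  have hp' : ∀ i : ℤ, -(N:ℤ) < i → i < N → 0 ≤ p i ∧ p i ≤ 1 := fun i h1 h2 => by
    have := hp i h1 h2; constructor <;> linarith
  have key : ∀ (g : ℤ → ℝ), (∀ x, 0 ≤ g x) → ∀ n,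
      ∑ x ∈ pset N (n+1), pw p (n+1) x * g (x (n+1)) ≤
      ∑ x ∈ pset N n, pw p n x * (p (x n) * g (x n + 1) + (1 - p (x n)) * g (x n - 1)) := by
    intro g hg n
    rw [pset_sum_succ]
    refine Finset.sum_le_sum fun x hx => ?_
    have hb := pset_bound N n hN x hx n
    have hb' := hp' _ hb.1 hb.2
    calc _ = pw p n x * ∑ y ∈ Finset.Ioo (-(N:ℤ)) N, stepProb (p (x n)) (y - x n) * g y := by
          rw [Finset.mul_sum]
          refine Finset.sum_congr rfl fun y _ => ?_
          rw [pw_update]; simp [mul_assoc]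
      _ ≤ _ := mul_le_mul_of_nonneg_left (sum_step_le N _ hb'.1 hb'.2 g hg _)
          (pw_nonneg N hN p hp' n x hx)
  have hmono : Antitone (fun n => ∑ x ∈ pset N n, pw p n x) := by
    refine antitone_nat_of_succ_le fun n => ?_
    simpa using key (fun _ => 1) (fun _ => zero_le_one) n
  have hdec : ∀ n, ∑ x ∈ pset N (n+1), pw p (n+1) x * f (x (n+1)) + ∑ x ∈ pset N n, pw p n x ≤
      ∑ x ∈ pset N n, pw p n x * f (x n) := by
    intro n
    have := key f hf n
    have e : ∑ x ∈ pset N n, pw p n x * (p (x n) * f (x n + 1) + (1 - p (x n)) * f (x n - 1))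
        = ∑ x ∈ pset N n, pw p n x * f (x n) - ∑ x ∈ pset N n, pw p n x := by
      rw [← Finset.sum_sub_distrib]
      refine Finset.sum_congr rfl fun x hx => ?_
      have hb := pset_bound N n hN x hx n
      rw [hfs _ hb.1 hb.2]; ring
    linarith
  have hsum : ∀ n, ∑ x ∈ pset N n, pw p n x * f (x n) +
      ∑ k ∈ Finset.range n, ∑ x ∈ pset N k, pw p k x ≤ f 0 := by
    intro n
    induction n with
    | zero => simp [pset, pw]
    | succ n ih =>
      rw [Finset.sum_range_succ]
      have := hdec n
      linarith
  have h1 := hsum (n+1)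
  have h2 : 0 ≤ ∑ x ∈ pset N (n+1), pw p (n+1) x * f (x (n+1)) :=
    Finset.sum_nonneg fun x hx => mul_nonneg (pw_nonneg N hN p hp' _ x hx) (hf _)
  have h3 : ((n:ℝ) + 1) * ∑ x ∈ pset N n, pw p n x ≤
      ∑ k ∈ Finset.range (n+1), ∑ x ∈ pset N k, pw p k x := by
    calc _ = ∑ k ∈ Finset.range (n+1), ∑ x ∈ pset N n, pw p n x := by simp
      _ ≤ _ := Finset.sum_le_sum fun k hk => hmono (by rw [Finset.mem_range] at hk; omega)
  linarith

/-- nearest-neighbour trajectories leaving `(-N,N)` cover one half of it -/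
lemma nn_cover (X : ℕ → ℤ) (h0 : X 0 = 0) (hs : ∀ i, X (i+1) - X i = 1 ∨ X (i+1) - X i = -1)
    (m : ℕ) : (∀ y : ℤ, 0 ≤ y → y ≤ X m → ∃ i ≤ m, X i = y) ∧
      (∀ y : ℤ, y ≤ 0 → X m ≤ y → ∃ i ≤ m, X i = y) := by
  induction m with
  | zero => constructor <;> intro y h1 h2 <;> exact ⟨0, le_rfl, by omega⟩
  | succ m ih =>
    constructor
    · intro y h1 h2
      by_cases h : y ≤ X m
      · obtain ⟨i, hi, e⟩ := ih.1 y h1 h; exact ⟨i, by omega, e⟩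
      · exact ⟨m+1, le_rfl, by have := hs m; omega⟩
    · intro y h1 h2
      by_cases h : X m ≤ y
      · obtain ⟨i, hi, e⟩ := ih.2 y h1 h; exact ⟨i, by omega, e⟩
      · exact ⟨m+1, le_rfl, by have := hs m; omega⟩

section prob
variable {Ω : Type*} [MeasurableSpace Ω] {μ : Measure Ω} [IsProbabilityMeasure μ]

lemma cyl_measure (env : ℤ → Ω → ℝ) (henv_meas : ∀ i, Measurable (env i))
    (X : ℕ → Ω → ℤ) (hX_meas : ∀ n, Measurable (X n))
    (hquenched : ∀ (n : ℕ) (x : ℕ → ℤ), x 0 = 0 →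
      μ[Set.indicator {ω | ∀ i ≤ n, X i ω = x i} (fun _ => (1 : ℝ)) |
          MeasurableSpace.comap (fun ω i => env i ω) MeasurableSpace.pi]
        =ᵐ[μ] fun ω => ∏ i ∈ Finset.range n, stepProb (env (x i) ω) (x (i + 1) - x i))
    (G : Set (ℤ → ℝ)) (hG : MeasurableSet G) (n : ℕ) (x : ℕ → ℤ) (hx : x 0 = 0) :
    IntegrableOn (fun ω => pw (fun i => env i ω) n x) {ω | (fun i => env i ω) ∈ G} μ ∧
    μ.real ({ω | (fun i => env i ω) ∈ G} ∩ {ω | ∀ i ≤ n, X i ω = x i}) =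
      ∫ ω in {ω | (fun i => env i ω) ∈ G}, pw (fun i => env i ω) n x ∂μ := by
  have hm : MeasurableSpace.comap (fun ω i => env i ω) MeasurableSpace.pi ≤
      (inferInstance : MeasurableSpace Ω) :=
    (measurable_pi_lambda _ henv_meas).comap_le
  have hA : MeasurableSet[MeasurableSpace.comap (fun ω i => env i ω) MeasurableSpace.pi]
      {ω | (fun i => env i ω) ∈ G} := ⟨G, hG, rfl⟩
  have hcyl : MeasurableSet {ω | ∀ i ≤ n, X i ω = x i} := by
    have : {ω | ∀ i ≤ n, X i ω = x i} = ⋂ i, ⋂ (_ : i ≤ n), X i ⁻¹' {x i} := by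
      ext; simp
    rw [this]
    exact MeasurableSet.iInter fun i => MeasurableSet.iInter fun _ =>
      hX_meas i (measurableSet_singleton _)
  have hint : Integrable (Set.indicator {ω | ∀ i ≤ n, X i ω = x i} (fun _ => (1 : ℝ))) μ :=
    (integrable_const _).indicator hcyl
  have h1 := setIntegral_condExp hm hint hA
  have hq := hquenched n x hx
  constructor
  · exact (integrable_condExp.congr hq).integrableOn
  · rw [setIntegral_congr_ae (hm _ hA) (hq.mono fun _ h _ => h)] at h1
    unfold pw
    rw [h1, integral_indicator hcyl, Measure.restrict_restrict hcyl]
    simp [Set.inter_comm]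

lemma nn_steps (env : ℤ → Ω → ℝ) (henv_meas : ∀ i, Measurable (env i))
    (X : ℕ → Ω → ℤ) (hX_meas : ∀ n, Measurable (X n))
    (hX0 : ∀ᵐ ω ∂μ, X 0 ω = 0)
    (hquenched : ∀ (n : ℕ) (x : ℕ → ℤ), x 0 = 0 →
      μ[Set.indicator {ω | ∀ i ≤ n, X i ω = x i} (fun _ => (1 : ℝ)) |
          MeasurableSpace.comap (fun ω i => env i ω) MeasurableSpace.pi]
        =ᵐ[μ] fun ω => ∏ i ∈ Finset.range n, stepProb (env (x i) ω) (x (i + 1) - x i)) :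
    ∀ᵐ ω ∂μ, ∀ i, X (i+1) ω - X i ω = 1 ∨ X (i+1) ω - X i ω = -1 := by
  rw [ae_all_iff]
  intro n
  let P : (Fin (n+2) → ℤ) → ℕ → ℤ := fun v i => if h : i < n+2 then v ⟨i, h⟩ else 0
  have h : ∀ v : Fin (n+2) → ℤ, ∀ᵐ ω ∂μ, (P v 0 = 0 ∧ ¬ (P v (n+1) - P v n = 1 ∨
      P v (n+1) - P v n = -1)) → ¬ ∀ i ≤ n+1, X i ω = P v i := by
    intro v
    by_cases hv : P v 0 = 0 ∧ ¬ (P v (n+1) - P v n = 1 ∨ P v (n+1) - P v n = -1)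
    swap
    · exact Eventually.of_forall fun ω h => absurd h hv
    have := (cyl_measure env henv_meas X hX_meas hquenched Set.univ MeasurableSet.univ (n+1)
      (P v) hv.1).2
    have hz : ∀ ω, pw (fun i => env i ω) (n+1) (P v) = 0 := by
      intro ω
      unfold pw
      rw [Finset.prod_range_succ]
      have h2 := hv.2
      rw [not_or] at h2
      have : stepProb (env (P v n) ω) (P v (n+1) - P v n) = 0 := by
        unfold stepProb; rw [if_neg h2.1, if_neg h2.2]
      rw [this, mul_zero]
    simp only [hz, integral_zero, Set.mem_univ, Set.ofPred_true, Set.univ_inter] at this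
    rw [measureReal_eq_zero_iff] at this
    rw [ae_iff]
    refine measure_mono_null (fun ω hω => ?_) this
    simp only [Set.mem_ofPred_eq] at hω ⊢
    tauto
  rw [← ae_all_iff] at h
  filter_upwards [h, hX0] with ω h h0
  by_contra hc
  have hP : ∀ i ≤ n+1, X i ω = P (fun j => X j ω) i := by
    intro i hi
    have : i < n+2 := by omega
    simp [P, this]
  refine h (fun j => X j ω) ⟨?_, ?_⟩ hP
  · rw [← hP 0 (by omega), h0]
  · rwa [← hP (n+1) le_rfl, ← hP n (by omega)]

/-- good environments -/
def goodEnv (N : ℕ) (δ B : ℝ) : Set (ℤ → ℝ) :=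
  {p | (∀ i : ℤ, δ ≤ p i ∧ p i ≤ 1 - δ) ∧
    ∀ z ∈ Finset.Ioo (-(N:ℤ)) N, ∀ y ∈ Finset.Ioo (-(N:ℤ)) N,
      ∑ w ∈ Finset.Ioc z y, Real.log ((1 - p w) / p w) < B}

lemma goodEnv_meas (N : ℕ) (δ B : ℝ) : MeasurableSet (goodEnv N δ B) := by
  have hl : ∀ w : ℤ, Measurable fun p : ℤ → ℝ => Real.log ((1 - p w) / p w) := fun w =>
    Real.measurable_log.comp ((measurable_const.sub (measurable_pi_apply w)).div
      (measurable_pi_apply w))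
  unfold goodEnv
  simp only [Set.ofPred_and, Set.ofPred_forall]
  refine MeasurableSet.inter (MeasurableSet.iInter fun i => MeasurableSet.inter ?_ ?_)
    (MeasurableSet.iInter fun z => MeasurableSet.iInter fun _ => MeasurableSet.iInter fun y =>
      MeasurableSet.iInter fun _ => ?_)
  · exact measurableSet_le measurable_const (measurable_pi_apply i)
  · exact measurableSet_le (measurable_pi_apply i) measurable_const
  · exact measurableSet_lt (Finset.measurable_sum _ fun w _ => hl w) measurable_const

lemma stay_measure (env : ℤ → Ω → ℝ) (henv_meas : ∀ i, Measurable (env i))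
    (X : ℕ → Ω → ℤ) (hX_meas : ∀ n, Measurable (X n))
    (hX0 : ∀ᵐ ω ∂μ, X 0 ω = 0)
    (hquenched : ∀ (n : ℕ) (x : ℕ → ℤ), x 0 = 0 →
      μ[Set.indicator {ω | ∀ i ≤ n, X i ω = x i} (fun _ => (1 : ℝ)) |
          MeasurableSpace.comap (fun ω i => env i ω) MeasurableSpace.pi]
        =ᵐ[μ] fun ω => ∏ i ∈ Finset.range n, stepProb (env (x i) ω) (x (i + 1) - x i))
    (N : ℕ) (hN : 0 < N) (δ B : ℝ) (hδ0 : 0 < δ) (hδ1 : δ < 1/2) (n : ℕ) :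
    μ.real ({ω | (fun i => env i ω) ∈ goodEnv N δ B} ∩
      {ω | ∀ i ≤ n, -(N:ℤ) < X i ω ∧ X i ω < N}) ≤
      2 * N ^ 2 * (Real.exp B / δ) / (n + 1) := by
  set A := {ω | (fun i => env i ω) ∈ goodEnv N δ B} with hAdef
  have hA : MeasurableSet A :=
    (measurable_pi_lambda (fun ω i => env i ω) henv_meas) (goodEnv_meas N δ B)
  have hc := fun x hx => cyl_measure env henv_meas X hX_meas hquenched _ (goodEnv_meas N δ B) n x
    (pset_start N n x hx)
  have h1 : μ.real (A ∩ {ω | ∀ i ≤ n, -(N:ℤ) < X i ω ∧ X i ω < N}) ≤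
      μ.real (⋃ x ∈ pset N n, (A ∩ {ω | ∀ i ≤ n, X i ω = x i})) := by
    refine ENNReal.toReal_mono (measure_ne_top _ _) (measure_mono_ae ?_)
    filter_upwards [hX0] with ω h0 hω
    obtain ⟨x, hx, hxi⟩ := pset_cover N n (fun i => X i ω) h0 hω.2
    exact Set.mem_biUnion (x := x) hx ⟨hω.1, hxi⟩
  calc _ ≤ _ := h1
    _ ≤ ∑ x ∈ pset N n, μ.real (A ∩ {ω | ∀ i ≤ n, X i ω = x i}) :=
        measureReal_biUnion_finset_le _ _
    _ = ∑ x ∈ pset N n, ∫ ω in A, pw (fun i => env i ω) n x ∂μ :=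
        Finset.sum_congr rfl fun x hx => (hc x hx).2
    _ = ∫ ω in A, ∑ x ∈ pset N n, pw (fun i => env i ω) n x ∂μ :=
        (integral_finsetSum _ fun x hx => (hc x hx).1).symm
    _ ≤ ∫ ω in A, 2 * N ^ 2 * (Real.exp B / δ) / (n + 1) ∂μ := by
        refine setIntegral_mono_on (integrable_finsetSum _ fun x hx => (hc x hx).1)
          (integrable_const _) hA fun ω hω => ?_
        rw [le_div_iff₀ (by positivity), mul_comm]
        refine stay_bound N hN _ δ (Real.exp B) hδ0 (fun i _ _ => hω.1 i) ?_ n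
        intro z y hz hzy hy
        have h3 := hω.2 z (Finset.mem_Ioo.2 ⟨hz, by omega⟩) y (Finset.mem_Ioo.2 ⟨by omega, hy⟩)
        have hpos : ∀ w, 0 < (1 - env w ω) / env w ω := fun w => by
          have := hω.1 w
          exact div_pos (by linarith) (by linarith)
        rw [← Real.log_prod (fun w _ => (hpos w).ne')] at h3
        rw [← Real.log_le_iff_le_exp (Finset.prod_pos fun w _ => hpos w)]
        exact h3.le
    _ ≤ _ := by
        rw [setIntegral_const, smul_eq_mul]
        have : μ.real A ≤ 1 := measureReal_le_one
        have h0 : 0 ≤ 2 * (N:ℝ) ^ 2 * (Real.exp B / δ) / (n + 1) := by positivity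
        nlinarith

lemma bad_env (env : ℤ → Ω → ℝ) (henv_meas : ∀ i, Measurable (env i))
    (henv_indep : iIndepFun (m := fun _ : ℤ => (inferInstance : MeasurableSpace ℝ)) env μ)
    (henv_ident : ∀ i, IdentDistrib (env i) (env 0) μ μ)
    (δ : ℝ) (hδ0 : 0 < δ) (hδ1 : δ < 1 / 2)
    (henv_ell : ∀ i, ∀ᵐ ω ∂μ, δ ≤ env i ω ∧ env i ω ≤ 1 - δ)
    (henv_mean : ∫ ω, Real.log ((1 - env 0 ω) / env 0 ω) ∂μ = 0) :
    ∃ c : ℝ, 0 < c ∧ ∀ (N : ℕ) (B : ℝ), 0 < N → 0 ≤ B →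
      μ.real {ω | (fun i => env i ω) ∉ goodEnv N δ B} ≤
        (2 * N) ^ 2 * Real.exp (- c * (B ^ 2 / N)) := by
  set g : ℝ → ℝ := fun p => Real.log ((1 - p) / p) with hg
  have hgm : Measurable g :=
    Real.measurable_log.comp ((measurable_const.sub measurable_id).div measurable_id)
  set b : ℝ := Real.log (1 / δ) with hb
  have hb0 : 0 < b := Real.log_pos (by rw [one_lt_div hδ0]; linarith)
  have hbd : ∀ i, ∀ᵐ ω ∂μ, g (env i ω) ∈ Set.Icc (-b) b := by
    intro i
    filter_upwards [henv_ell i] with ω ⟨h1, h2⟩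
    have hp : 0 < env i ω := by linarith
    have hq : 0 < 1 - env i ω := by linarith
    constructor
    · rw [hb, ← Real.log_inv]
      refine Real.log_le_log (by positivity) ?_
      rw [one_div, inv_inv, le_div_iff₀ hp]
      nlinarith
    · refine Real.log_le_log (by positivity) ?_
      rw [div_le_div_iff₀ hp hδ0]
      nlinarith
  have hsub : ∀ i, HasSubgaussianMGF (fun ω => g (env i ω)) ((‖b - -b‖₊ / 2) ^ 2) μ := by
    intro i
    refine hasSubgaussianMGF_of_mem_Icc_of_integral_eq_zero
      (hgm.comp (henv_meas i)).aemeasurable (hbd i) ?_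
    have := ((henv_ident i).comp hgm).integral_eq
    simp only [Function.comp_def] at this
    rw [this]; exact henv_mean
  have hind : iIndepFun (fun i ω => g (env i ω)) μ := henv_indep.comp (fun _ => g) (fun _ => hgm)
  have hcoe : (((‖b - -b‖₊ / 2) ^ 2 : NNReal) : ℝ) = b ^ 2 := by
    push_cast
    rw [Real.norm_eq_abs, abs_of_pos (by linarith)]; ring
  refine ⟨1 / (4 * b ^ 2), by positivity, fun N B hN hB => ?_⟩
  have hN' : (0:ℝ) < N := by exact_mod_cast hN
  have hell : ∀ᵐ ω ∂μ, ∀ i, δ ≤ env i ω ∧ env i ω ≤ 1 - δ := ae_all_iff.2 henv_ell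
  set I := Finset.Ioo (-(N:ℤ)) N with hI
  have hIc : (I.card : ℝ) ≤ 2 * N := by
    rw [hI, Int.card_Ioo]
    have : ((N:ℤ) - -(N:ℤ) - 1).toNat ≤ 2 * N := by omega
    exact_mod_cast this
  have hone : ∀ q ∈ I ×ˢ I, μ.real {ω | B ≤ ∑ w ∈ Finset.Ioc q.1 q.2, g (env w ω)} ≤
      Real.exp (- (1 / (4 * b ^ 2)) * (B ^ 2 / N)) := by
    intro q hq
    simp only [hI, Finset.mem_product, Finset.mem_Ioo] at hq
    by_cases hlt : q.1 < q.2
    · refine (HasSubgaussianMGF.measure_sum_ge_le_of_iIndepFun hind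
        (s := Finset.Ioc q.1 q.2) (fun i _ => hsub i) hB).trans ?_
      rw [Real.exp_le_exp, Finset.sum_const, nsmul_eq_mul, NNReal.coe_mul, hcoe,
        Int.card_Ioc]
      have h1 : (q.2 - q.1).toNat ≤ 2 * N := by omega
      have h2 : 0 < (q.2 - q.1).toNat := by omega
      have h1' : ((q.2 - q.1).toNat : ℝ) ≤ 2 * N := by exact_mod_cast h1
      have h2' : (0:ℝ) < ((q.2 - q.1).toNat : ℝ) := by exact_mod_cast h2
      have : - (1 / (4 * b ^ 2)) * (B ^ 2 / N) = - B ^ 2 / (2 * (2 * N * b ^ 2)) := by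
        field_simp; ring
      rw [this, neg_div, neg_div, neg_le_neg_iff, NNReal.coe_natCast]
      gcongr
    · have he : Finset.Ioc q.1 q.2 = ∅ := Finset.Ioc_eq_empty hlt
      rw [he]
      simp only [Finset.sum_empty]
      by_cases hB0 : B = 0
      · simp [hB0]
      · have : ¬ B ≤ 0 := fun h => hB0 (le_antisymm h hB)
        simp [this, Real.exp_nonneg]
  calc μ.real {ω | (fun i => env i ω) ∉ goodEnv N δ B}
      ≤ μ.real (⋃ q ∈ I ×ˢ I, {ω | B ≤ ∑ w ∈ Finset.Ioc q.1 q.2, g (env w ω)}) := by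
        refine ENNReal.toReal_mono (measure_ne_top _ _) (measure_mono_ae ?_)
        filter_upwards [hell] with ω he hω
        have hω' : ¬ ((fun i => env i ω) ∈ goodEnv N δ B) := hω
        simp only [goodEnv, Set.mem_ofPred_eq, not_and, not_forall, not_lt] at hω'
        obtain ⟨z, hz, y, hy, h⟩ := hω' he
        exact Set.mem_biUnion (x := (z, y)) (Finset.mem_coe.2 (Finset.mem_product.2 ⟨hz, hy⟩)) h
    _ ≤ ∑ q ∈ I ×ˢ I, μ.real {ω | B ≤ ∑ w ∈ Finset.Ioc q.1 q.2, g (env w ω)} :=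
        measureReal_biUnion_finset_le _ _
    _ ≤ ∑ q ∈ I ×ˢ I, Real.exp (- (1 / (4 * b ^ 2)) * (B ^ 2 / N)) := Finset.sum_le_sum hone
    _ = (I.card : ℝ) ^ 2 * Real.exp (- (1 / (4 * b ^ 2)) * (B ^ 2 / N)) := by
        rw [Finset.sum_const, Finset.card_product, nsmul_eq_mul]; push_cast; ring
    _ ≤ _ := by gcongr

lemma no_deep (sce : ℤ → Ω → ℝ) 
    (hsce_indep : iIndepFun (m := fun _ : ℤ => (inferInstance : MeasurableSpace ℝ)) sce μ)
    (hsce_ident : ∀ x, IdentDistrib (sce x) (sce 0) μ μ)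
    (lam t : ℝ) (ht : t ≤ (μ {ω | lam < max (-(sce 0 ω)) 0}).toReal) (S : Finset ℤ)
    (hsce_meas : ∀ x, Measurable (sce x)) :
    μ.real {ω | ∀ x ∈ S, ¬ lam < max (-(sce x ω)) 0} ≤ Real.exp (- (S.card * t)) := by
  set D : Set ℝ := {u | ¬ lam < max (-u) 0} with hD
  have hDm : MeasurableSet D := by
    have : MeasurableSet {u : ℝ | lam < max (-u) 0} :=
      measurableSet_lt measurable_const (measurable_neg.max measurable_const)
    exact this.compl
  have h := hsce_indep.measure_inter_preimage_eq_mul S (sets := fun _ => D) (fun _ _ => hDm)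
  have e : {ω | ∀ x ∈ S, ¬ lam < max (-(sce x ω)) 0} = ⋂ x ∈ S, sce x ⁻¹' D := by
    ext; simp [hD]
  have h0 : ∀ x, μ (sce x ⁻¹' D) = μ (sce 0 ⁻¹' D) := fun x =>
    (hsce_ident x).measure_preimage_eq hDm
  have hc : μ.real (sce 0 ⁻¹' D) = 1 - (μ {ω | lam < max (-(sce 0 ω)) 0}).toReal := by
    have : sce 0 ⁻¹' D = {ω | lam < max (-(sce 0 ω)) 0}ᶜ := by ext; simp [hD]
    rw [this, probReal_compl_eq_one_sub]
    · rfl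
    · exact measurableSet_lt measurable_const ((hsce_meas 0).neg.max measurable_const)
  rw [e, Measure.real, h]
  simp only [h0, Finset.prod_const, ENNReal.toReal_pow]
  change μ.real (sce 0 ⁻¹' D) ^ S.card ≤ _
  have h2 : μ.real (sce 0 ⁻¹' D) ≤ Real.exp (-t) := by
    rw [hc]
    have := Real.add_one_le_exp (-t)
    linarith
  calc _ ≤ Real.exp (-t) ^ S.card := pow_le_pow_left₀ measureReal_nonneg h2 _
    _ = _ := by rw [← Real.exp_nat_mul]; congr 1; ring

end prob

lemma summable_stretched (c s r : ℝ) (hc : 0 < c) (hs : 0 < s) :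
    Summable (fun k : ℕ => (k:ℝ) ^ r * Real.exp (- c * (k:ℝ) ^ s)) := by
  have h1 := (isLittleO_exp_neg_mul_rpow_atTop hc (-(r + 2) / s)).isBigO
  have h2 : Tendsto (fun k : ℕ => (k:ℝ) ^ s) atTop atTop :=
    (tendsto_rpow_atTop hs).comp tendsto_natCast_atTop_atTop
  have h3 := h1.comp_tendsto h2
  have h4 : (fun k : ℕ => (k:ℝ) ^ r * Real.exp (- c * (k:ℝ) ^ s)) =O[atTop]
      (fun k : ℕ => (k:ℝ) ^ (-2 : ℝ)) := by
    refine ((Asymptotics.isBigO_refl (fun k : ℕ => (k:ℝ) ^ r) atTop).mul h3).trans_eventuallyEq ?_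
    filter_upwards [eventually_gt_atTop 0] with k hk
    have hk' : (0:ℝ) < k := by exact_mod_cast hk
    simp only [Function.comp]
    rw [← Real.rpow_mul hk'.le, ← Real.rpow_add hk']
    congr 1
    field_simp
    ring
  exact summable_of_isBigO_nat (Real.summable_nat_rpow.2 (by norm_num)) h4

lemma bc_real {Ω : Type*} [MeasurableSpace Ω] {μ : Measure Ω} [IsProbabilityMeasure μ]
    (s : ℕ → Set Ω) (u : ℕ → ℝ) (hu : Summable u) (h : ∀ᶠ k in atTop, μ.real (s k) ≤ u k) :
    ∀ᵐ ω ∂μ, ∀ᶠ k in atTop, ω ∉ s k := by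
  have h1 : Summable (fun k => μ.real (s k)) := by
    refine Summable.of_norm_bounded_eventually_nat hu ?_
    filter_upwards [h] with k hk
    rwa [Real.norm_of_nonneg measureReal_nonneg]
  refine ae_eventually_notMem ?_
  have := h1.tsum_ofReal_ne_top
  simpa using this

lemma final_real (γ a : ℝ) (n : ℕ) (hn2 : 2 ≤ n) (hna : a + 1 ≤ n) :
    (n:ℝ) ^ γ * (n * a - Real.exp (2 * (|γ| + 2) * (Nat.log 2 n : ℕ))) ≤ -n := by
  set k := Nat.log 2 n with hk
  have hn0 : (0:ℝ) < n := by exact_mod_cast (by omega : 0 < n)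
  have hn1 : (1:ℝ) ≤ n := by exact_mod_cast (by omega : 1 ≤ n)
  have hk1 : 1 ≤ k := Nat.le_log_of_pow_le (by norm_num) (by simpa using hn2)
  have hlt : n < 2 ^ (k+1) := Nat.lt_pow_succ_log_self (by norm_num) n
  have hlog : Real.log n ≤ 2 * k := by
    have h1 : (n:ℝ) ≤ 2 ^ (k+1) := by exact_mod_cast hlt.le
    have h2 := Real.log_le_log hn0 h1
    rw [Real.log_pow] at h2
    push_cast at h2
    have h3 := Real.log_two_lt_d9
    have h4 : (1:ℝ) ≤ k := by exact_mod_cast hk1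
    nlinarith
  have hM : (n:ℝ) ^ (|γ| + 2) ≤ Real.exp (2 * (|γ| + 2) * k) := by
    rw [Real.rpow_def_of_pos hn0, Real.exp_le_exp]
    have : 0 ≤ |γ| := abs_nonneg γ
    nlinarith
  have hsplit : (n:ℝ) ^ (|γ| + 2) = (n:ℝ) ^ |γ| * (n:ℝ)^2 := by
    rw [Real.rpow_add hn0]; norm_cast
  have hg1 : 1 ≤ (n:ℝ) ^ |γ| := Real.one_le_rpow hn1 (abs_nonneg γ)
  have hA : n * a - Real.exp (2 * (|γ| + 2) * k) ≤ - ((n:ℝ) ^ |γ| * n) := by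
    rw [hsplit] at hM
    have h5 : (n:ℝ) * a ≤ n * n - n := by nlinarith
    have h6 : (0:ℝ) ≤ n * n - n := by nlinarith
    nlinarith
  have hpos : 0 < (n:ℝ) ^ γ := Real.rpow_pos_of_pos hn0 γ
  calc _ ≤ (n:ℝ) ^ γ * (- ((n:ℝ) ^ |γ| * n)) := mul_le_mul_of_nonneg_left hA hpos.le
    _ = - ((n:ℝ) ^ (γ + |γ|) * n) := by rw [Real.rpow_add hn0]; ring
    _ ≤ - n := by
      have : 1 ≤ (n:ℝ) ^ (γ + |γ|) := Real.one_le_rpow hn1 (by linarith [neg_abs_le γ])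
      nlinarith

/-- Remark 3.3: if `a := ess sup ξ₀ < ∞` and `Q{ξ₀⁻ > λ} ≥ 1/(log λ)^α` for all
large `λ` (for some `α ∈ (0,2)`), then for every `ε' > 0`, `ℙ⊗Q`-almost surely
`n^{−2/α+ε'} Z_n → −∞`. -/
theorem stmt2 {Ω : Type*} [MeasurableSpace Ω] (μ : Measure Ω) [IsProbabilityMeasure μ]
    -- the i.i.d. environment
    (env : ℤ → Ω → ℝ) (henv_meas : ∀ i, Measurable (env i))
    (henv_indep : iIndepFun (m := fun _ : ℤ => (inferInstance : MeasurableSpace ℝ)) env μ)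
    (henv_ident : ∀ i, IdentDistrib (env i) (env 0) μ μ)
    (δ : ℝ) (hδ0 : 0 < δ) (hδ1 : δ < 1 / 2)
    (henv_ell : ∀ i, ∀ᵐ ω ∂μ, δ ≤ env i ω ∧ env i ω ≤ 1 - δ)
    (henv_mean : ∫ ω, Real.log ((1 - env 0 ω) / env 0 ω) ∂μ = 0)
    (henv_var : 0 < variance (fun ω => Real.log ((1 - env 0 ω) / env 0 ω)) μ)
    -- Sinai's walk: a nearest-neighbour Markov chain in the environment `env`,
    -- characterized by its quenched cylinder probabilities given `σ(env)`
    (X : ℕ → Ω → ℤ) (hX_meas : ∀ n, Measurable (X n))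
    (hX0 : ∀ᵐ ω ∂μ, X 0 ω = 0)
    (hquenched : ∀ (n : ℕ) (x : ℕ → ℤ), x 0 = 0 →
      μ[Set.indicator {ω | ∀ i ≤ n, X i ω = x i} (fun _ => (1 : ℝ)) |
          MeasurableSpace.comap (fun ω i => env i ω) MeasurableSpace.pi]
        =ᵐ[μ] fun ω => ∏ i ∈ Finset.range n, stepProb (env (x i) ω) (x (i + 1) - x i))
    -- the i.i.d. scenery, independent of the environment and of the walk
    (sce : ℤ → Ω → ℝ) (hsce_meas : ∀ x, Measurable (sce x))
    (hsce_indep : iIndepFun (m := fun _ : ℤ => (inferInstance : MeasurableSpace ℝ)) sce μ)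
    (hsce_ident : ∀ x, IdentDistrib (sce x) (sce 0) μ μ)
    (hsce_env_walk_indep :
      IndepFun (fun ω => (fun x : ℤ => sce x ω))
        (fun ω => ((fun i : ℤ => env i ω), (fun n : ℕ => X n ω))) μ)
    -- `a := ess sup ξ₀ < ∞`
    (a : ℝ) (ha : a = essSup (fun ω => sce 0 ω) μ) (ha_fin : ∀ᵐ ω ∂μ, sce 0 ω ≤ a)
    -- heavy negative tails: `Q{ξ₀⁻ > λ} ≥ 1/(log λ)^α` for all large `λ`
    (α : ℝ) (hα : 0 < α) (hα2 : α < 2) (lam₀ : ℝ) (hlam₀ : 1 < lam₀)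
    (htail : ∀ lam : ℝ, lam₀ ≤ lam →
      1 / Real.log lam ^ (α : ℝ) ≤ (μ {ω | lam < max (-(sce 0 ω)) 0}).toReal) :
    ∀ ε' : ℝ, 0 < ε' → ∀ᵐ ω ∂μ,
      Tendsto (fun n : ℕ =>
          (n : ℝ) ^ (-2 / α + ε' : ℝ) * ∑ i ∈ Finset.range (n + 1), sce (X i ω) ω)
        atTop atBot := by
  intro ε' _
  set γ : ℝ := -2 / α + ε' with hγ
  set K : ℝ := 2 * (|γ| + 2) with hK
  have hK0 : 0 < K := by have := abs_nonneg γ; positivity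
  obtain ⟨c, hc0, hbad⟩ := bad_env env henv_meas henv_indep henv_ident δ hδ0 hδ1 henv_ell henv_mean
  obtain ⟨β, hβ1, hβ2⟩ := exists_between hα2
  have hβ0 : 0 < β := hα.trans hβ1
  set N : ℕ → ℕ := fun k => ⌈(k:ℝ) ^ β⌉₊ with hNdef
  have hNlow : ∀ k : ℕ, (k:ℝ) ^ β ≤ N k := fun k => Nat.le_ceil _
  have hNup : ∀ k : ℕ, 1 ≤ k → (N k : ℝ) ≤ 2 * (k:ℝ) ^ β := by
    intro k hk
    have h1 : (1:ℝ) ≤ (k:ℝ) ^ β := Real.one_le_rpow (by exact_mod_cast hk) hβ0.le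
    have := Nat.ceil_lt_add_one (zero_le_one.trans h1)
    simp only [hNdef]; linarith
  have hNpos : ∀ k : ℕ, 1 ≤ k → 0 < N k := by
    intro k hk
    have h1 : (1:ℝ) ≤ (k:ℝ) ^ β := Real.one_le_rpow (by exact_mod_cast hk) hβ0.le
    have h2 := hNlow k
    have : (0:ℝ) < N k := by linarith
    exact_mod_cast this
  have hsq : ∀ k : ℕ, 1 ≤ k → (N k : ℝ) ^ 2 ≤ 4 * (k:ℝ) ^ (2 * β) := by
    intro k hk
    have h1 := hNup k hk
    have h2 : (k:ℝ) ^ (2 * β) = ((k:ℝ) ^ β) ^ 2 := by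
      rw [mul_comm, Real.rpow_mul (Nat.cast_nonneg k)]; norm_cast
    rw [h2]
    have h3 : (0:ℝ) ≤ N k := Nat.cast_nonneg _
    nlinarith
  -- bad environments
  have E1 : ∀ᵐ ω ∂μ, ∀ᶠ k : ℕ in atTop,
      ω ∉ {ω | (fun i => env i ω) ∉ goodEnv (N k) δ ((k:ℝ) / 2)} := by
    refine bc_real _ (fun k => 16 * ((k:ℝ) ^ (2 * β) * Real.exp (-(c/8) * (k:ℝ) ^ (2 - β))))
      ((summable_stretched (c/8) (2 - β) (2 * β) (by positivity) (by linarith)).mul_left _) ?_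
    filter_upwards [eventually_ge_atTop 1] with k hk
    have hk' : (0:ℝ) < k := by exact_mod_cast hk
    have hN0 : (0:ℝ) < N k := by exact_mod_cast hNpos k hk
    refine (hbad (N k) ((k:ℝ)/2) (hNpos k hk) (by positivity)).trans ?_
    have h1 : (2 * (N k:ℝ)) ^ 2 ≤ 16 * (k:ℝ) ^ (2 * β) := by have := hsq k hk; nlinarith
    have h2 : Real.exp (-c * (((k:ℝ)/2)^2 / N k)) ≤ Real.exp (-(c/8) * (k:ℝ) ^ (2 - β)) := by
      rw [Real.exp_le_exp]
      have h3 : (k:ℝ) ^ (2 - β) = (k:ℝ)^2 / (k:ℝ)^β := by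
        rw [Real.rpow_sub hk']; norm_cast
      have hkb : 0 < (k:ℝ)^β := Real.rpow_pos_of_pos hk' _
      have h4 : (k:ℝ)^2 / (k:ℝ)^β / 8 ≤ ((k:ℝ)/2)^2 / N k := by
        rw [div_div, div_le_div_iff₀ (by positivity) hN0]
        have := hNup k hk
        have h5 : 0 ≤ (k:ℝ)^2 := by positivity
        nlinarith
      rw [h3]
      nlinarith
    calc _ ≤ (16 * (k:ℝ) ^ (2 * β)) * Real.exp (-(c/8) * (k:ℝ) ^ (2 - β)) :=
          mul_le_mul h1 h2 (Real.exp_nonneg _) (by positivity)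
      _ = _ := by ring
  -- slow exits
  have E2 : ∀ᵐ ω ∂μ, ∀ᶠ k : ℕ in atTop,
      ω ∉ ({ω | (fun i => env i ω) ∈ goodEnv (N k) δ ((k:ℝ) / 2)} ∩
        {ω | ∀ i ≤ 2 ^ k, -(N k:ℤ) < X i ω ∧ X i ω < N k}) := by
    refine bc_real _ (fun k => (8/δ) * ((k:ℝ) ^ (2 * β) * Real.exp (-(1/10) * (k:ℝ) ^ (1:ℝ))))
      ((summable_stretched (1/10) 1 (2 * β) (by norm_num) (by norm_num)).mul_left _) ?_
    filter_upwards [eventually_ge_atTop 1] with k hk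
    refine (stay_measure env henv_meas X hX_meas hX0 hquenched (N k) (hNpos k hk) δ ((k:ℝ)/2)
      hδ0 hδ1 (2 ^ k)).trans ?_
    have h2 : Real.exp ((k:ℝ)/2) / (((2:ℕ) ^ k : ℕ) + 1 : ℝ) ≤
        Real.exp (-(1/10) * (k:ℝ) ^ (1:ℝ)) := by
      rw [div_le_iff₀ (by positivity), Real.rpow_one]
      have h3 : Real.exp ((k:ℝ) * Real.log 2) = ((2:ℕ) ^ k : ℕ) := by
        rw [Real.exp_nat_mul, Real.exp_log (by norm_num)]; norm_cast
      rw [← h3]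
      have h4 := Real.log_two_gt_d9
      have hk' : (0:ℝ) ≤ k := Nat.cast_nonneg k
      calc Real.exp ((k:ℝ)/2) ≤ Real.exp (-(1/10) * k) * Real.exp ((k:ℝ) * Real.log 2) := by
            rw [← Real.exp_add, Real.exp_le_exp]; nlinarith
        _ ≤ _ := by
            have := Real.exp_nonneg (-(1/10) * (k:ℝ))
            nlinarith
    calc 2 * (N k : ℝ) ^ 2 * (Real.exp ((k:ℝ)/2) / δ) / (((2:ℕ) ^ k : ℕ) + 1 : ℝ)
        = (2 / δ) * ((N k : ℝ) ^ 2 * (Real.exp ((k:ℝ)/2) / (((2:ℕ) ^ k : ℕ) + 1 : ℝ))) := by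
          ring
      _ ≤ (2 / δ) * ((4 * (k:ℝ) ^ (2 * β)) * Real.exp (-(1/10) * (k:ℝ) ^ (1:ℝ))) := by
          refine mul_le_mul_of_nonneg_left ?_ (by positivity)
          exact mul_le_mul (hsq k hk) h2 (by positivity) (by positivity)
      _ = _ := by ring
  -- scenery
  have E3 : ∀ S : ℕ → Finset ℤ, (∀ k, (S k).card = N k) → ∀ᵐ ω ∂μ, ∀ᶠ k : ℕ in atTop,
      ω ∉ {ω | ∀ x ∈ S k, ¬ Real.exp (K * k) < max (-(sce x ω)) 0} := by
    intro S hS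
    refine bc_real _ (fun k => (k:ℝ) ^ (0:ℝ) * Real.exp (-(1 / K ^ α) * (k:ℝ) ^ (β - α)))
      (summable_stretched (1 / K ^ α) (β - α) 0 (by positivity) (by linarith)) ?_
    have ht : Tendsto (fun k : ℕ => Real.exp (K * k)) atTop atTop :=
      Real.tendsto_exp_atTop.comp (tendsto_natCast_atTop_atTop.const_mul_atTop hK0)
    filter_upwards [eventually_ge_atTop 1, ht.eventually_ge_atTop lam₀] with k hk hl
    have hk' : (0:ℝ) < k := by exact_mod_cast hk
    refine (no_deep sce hsce_indep hsce_ident _ _ (htail _ hl) (S k) hsce_meas).trans ?_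
    rw [Real.rpow_zero, one_mul, Real.exp_le_exp, hS, Real.log_exp,
      Real.mul_rpow hK0.le hk'.le, Real.rpow_sub hk', neg_mul, neg_le_neg_iff]
    have h1 : 0 < K ^ α := Real.rpow_pos_of_pos hK0 _
    have h2 : 0 < (k:ℝ) ^ α := Real.rpow_pos_of_pos hk' _
    calc 1 / K ^ α * ((k:ℝ) ^ β / (k:ℝ) ^ α) = (k:ℝ) ^ β * (1 / (K ^ α * (k:ℝ) ^ α)) := by
          field_simp
      _ ≤ _ := mul_le_mul_of_nonneg_right (hNlow k) (by positivity)
  have E4 := E3 (fun k => Finset.Ico 0 (N k : ℤ)) (fun k => by simp)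
  have E5 := E3 (fun k => Finset.Ioc (-(N k : ℤ)) 0) (fun k => by simp)
  have Ea : ∀ᵐ ω ∂μ, ∀ x, sce x ω ≤ a := by
    rw [ae_all_iff]
    intro x
    exact (hsce_ident x).symm.ae_snd (p := fun u => u ≤ a) measurableSet_Iic ha_fin
  have hlogt : Tendsto (fun n : ℕ => Nat.log 2 n) atTop atTop := by
    rw [tendsto_atTop]
    intro b
    filter_upwards [eventually_ge_atTop (2 ^ b)] with n hn
    exact Nat.le_log_of_pow_le (by norm_num) hn
  filter_upwards [E1, E2, E4, E5, Ea, hX0, nn_steps env henv_meas X hX_meas hX0 hquenched]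
    with ω e1 e2 e4 e5 ea h0 hnn
  have hk : ∀ᶠ k : ℕ in atTop, ∃ j ≤ 2 ^ k, sce (X j ω) ω < - Real.exp (K * k) := by
    filter_upwards [e1, e2, e4, e5] with k f1 f2 f4 f5
    simp only [Set.mem_ofPred_eq, not_not, Set.mem_inter_iff, not_and, not_forall] at f1 f2 f4 f5
    obtain ⟨i, hi, hout⟩ := f2 f1
    have hcov := nn_cover (fun i => X i ω) h0 hnn i
    have hdeep : ∀ x, Real.exp (K * k) < max (-(sce x ω)) 0 → sce x ω < - Real.exp (K * k) := by
      intro x hx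
      have := Real.exp_pos (K * k)
      rcases lt_max_iff.1 hx with h | h <;> linarith
    by_cases hc : (N k : ℤ) ≤ X i ω
    · obtain ⟨x, hx, hxd⟩ := f4
      rw [Finset.mem_Ico] at hx
      obtain ⟨j, hj, e⟩ := hcov.1 x hx.1 (by omega)
      exact ⟨j, hj.trans hi, by rw [e]; exact hdeep x hxd⟩
    · obtain ⟨x, hx, hxd⟩ := f5
      rw [Finset.mem_Ioc] at hx
      obtain ⟨j, hj, e⟩ := hcov.2 x hx.2 (by
        by_contra hcc
        exact hout (by omega) (by omega))
      exact ⟨j, hj.trans hi, by rw [e]; exact hdeep x hxd⟩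
  have hn := hlogt.eventually hk
  refine tendsto_atBot_mono' atTop ?_
    (tendsto_neg_atTop_atBot.comp (tendsto_natCast_atTop_atTop (R := ℝ)))
  filter_upwards [hn, eventually_ge_atTop 2, eventually_ge_atTop (⌈|a| + 1⌉₊)] with n h1 h2 h3
  obtain ⟨j, hj, hd⟩ := h1
  have hjn : j ≤ n := hj.trans (Nat.pow_log_le_self 2 (by omega))
  have hna : |a| + 1 ≤ n := (Nat.le_ceil _).trans (by exact_mod_cast h3)
  have hZ : ∑ i ∈ Finset.range (n + 1), sce (X i ω) ω ≤
      n * |a| - Real.exp (K * (Nat.log 2 n : ℕ)) := by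
    have hmem : j ∈ Finset.range (n+1) := Finset.mem_range.2 (by omega)
    rw [← Finset.add_sum_erase _ _ hmem]
    have : ∑ i ∈ (Finset.range (n+1)).erase j, sce (X i ω) ω ≤
        ∑ i ∈ (Finset.range (n+1)).erase j, |a| :=
      Finset.sum_le_sum fun i _ => (ea _).trans (le_abs_self a)
    rw [Finset.sum_const, Finset.card_erase_of_mem hmem, Finset.card_range, nsmul_eq_mul] at this
    simp only [Nat.add_sub_cancel] at this
    linarith
  calc _ ≤ (n:ℝ) ^ γ * (n * |a| - Real.exp (K * (Nat.log 2 n : ℕ))) :=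
        mul_le_mul_of_nonneg_left hZ (Real.rpow_nonneg (Nat.cast_nonneg n) _)
    _ ≤ _ := final_real γ |a| n h2 hna
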